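/- Let U be a closed subspace of L²(Ω̄) and Λ a closed subspace of L²(Ω_I), and define b(v,λ) = ∫_{Ω_I} v(x)·λ(x) dx for v ∈ U and λ ∈ Λ. Suppose there is a constant β > 0 such that every λ ∈ Λ admits an extension λ̃ ∈ U with λ̃|_{Ω_I} = λ and β·‖λ̃‖_{L²(Ω̄)} ≤ ‖λ‖_{L²(Ω_I)}. Then the inf-sup condition β ≤ inf_{λ∈Λ, λ≠0} sup_{v∈U, v≠0} |b(v,λ)| / (‖v‖_{L²(Ω̄)}·‖λ‖_{L²(Ω_I)}) holds. -/

import Mathlib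

open MeasureTheory

theorem stmt7 {n : ℕ} (Ω ΩI : Set (EuclideanSpace ℝ (Fin n)))
    (hΩmeas : MeasurableSet Ω) (hΩImeas : MeasurableSet ΩI)
    (hdisj : Disjoint Ω ΩI)
    (hΩbdd : Bornology.IsBounded Ω) (hΩIbdd : Bornology.IsBounded ΩI)
    (hΩpos : 0 < volume Ω) (hΩIpos : 0 < volume ΩI)
    (U : Submodule ℝ (Lp ℝ 2 (volume.restrict (Ω ∪ ΩI))))
    (hUclosed : IsClosed (U : Set (Lp ℝ 2 (volume.restrict (Ω ∪ ΩI)))))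
    (Λ : Submodule ℝ (Lp ℝ 2 (volume.restrict ΩI)))
    (hΛclosed : IsClosed (Λ : Set (Lp ℝ 2 (volume.restrict ΩI))))
    (β : ℝ) (hβ : 0 < β)
    -- every λ ∈ Λ admits an extension λ̃ ∈ U with λ̃|_{Ω_I} = λ and β‖λ̃‖ ≤ ‖λ‖
    (hext : ∀ l ∈ Λ, ∃ lt ∈ U,
      (∀ᵐ x ∂(volume.restrict ΩI), lt x = l x) ∧ β * ‖lt‖ ≤ ‖l‖) :
    -- the inf-sup condition: for every nonzero λ ∈ Λ,
    -- β ≤ sup_{0 ≠ v ∈ U} |b(v,λ)| / (‖v‖ ‖λ‖)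
    ∀ l ∈ Λ, l ≠ 0 →
      β ≤ ⨆ v : {v : Lp ℝ 2 (volume.restrict (Ω ∪ ΩI)) // v ∈ U ∧ v ≠ 0},
        |∫ x in ΩI, (v : Lp ℝ 2 (volume.restrict (Ω ∪ ΩI))) x * l x| /
          (‖(v : Lp ℝ 2 (volume.restrict (Ω ∪ ΩI)))‖ * ‖l‖) := by
  intro l hl hl0
  have hle : volume.restrict ΩI ≤ volume.restrict (Ω ∪ ΩI) :=
    Measure.restrict_mono Set.subset_union_right le_rfl
  have hlpos : 0 < ‖l‖ := norm_pos_iff.mpr hl0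
  have hbdd : BddAbove (Set.range fun v : {v : Lp ℝ 2 (volume.restrict (Ω ∪ ΩI)) // v ∈ U ∧ v ≠ 0} =>
        |∫ x in ΩI, (v : Lp ℝ 2 (volume.restrict (Ω ∪ ΩI))) x * l x| /
          (‖(v : Lp ℝ 2 (volume.restrict (Ω ∪ ΩI)))‖ * ‖l‖)) := by
    refine ⟨1, ?_⟩
    rintro _ ⟨⟨v, hvU, hv0⟩, rfl⟩
    have hvpos : 0 < ‖v‖ := norm_pos_iff.mpr hv0
    have hm : MemLp v 2 (volume.restrict ΩI) := (Lp.memLp v).mono_measure hle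
    have hw : ‖hm.toLp v‖ ≤ ‖v‖ := by
      rw [Lp.norm_toLp, Lp.norm_def]
      exact ENNReal.toReal_mono (Lp.eLpNorm_ne_top v) (eLpNorm_mono_measure _ hle)
    have hi : ∫ x in ΩI, v x * l x = inner ℝ (hm.toLp v) l := by
      rw [L2.inner_def]
      apply integral_congr_ae
      filter_upwards [hm.coeFn_toLp] with x hx
      simp [hx, mul_comm]
    change |∫ x in ΩI, v x * l x| / (‖v‖ * ‖l‖) ≤ 1
    rw [div_le_one (by positivity), hi]
    exact (abs_real_inner_le_norm _ _).trans (by gcongr)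
  obtain ⟨lt, hltU, hlt, hn⟩ := hext l hl
  have hlt0 : lt ≠ 0 := by
    rintro rfl
    apply hl0
    rw [Lp.eq_zero_iff_ae_eq_zero]
    have h0 := ae_mono hle (Lp.coeFn_zero ℝ 2 (volume.restrict (Ω ∪ ΩI)))
    filter_upwards [hlt, h0] with x hx h0x
    rw [← hx, h0x]
  have hltpos : 0 < ‖lt‖ := norm_pos_iff.mpr hlt0
  refine le_trans ?_ (le_ciSup hbdd ⟨lt, hltU, hlt0⟩)
  have hi : ∫ x in ΩI, lt x * l x = ‖l‖ * ‖l‖ := by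
    rw [← real_inner_self_eq_norm_mul_norm, L2.inner_def]
    apply integral_congr_ae
    filter_upwards [hlt] with x hx
    simp [hx, sq]
  change β ≤ |∫ x in ΩI, lt x * l x| / (‖lt‖ * ‖l‖)
  rw [hi, abs_of_pos (by positivity), le_div_iff₀ (by positivity), ← mul_assoc]
  gcongr
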